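/- arXiv:1006.5285 — 2 statements merged into one kernel-verified Lean document; each statement's English description precedes it below -/
import Mathlib

section
/- Let G be a locally minimal Hausdorff topological group which is NSnS, and let H be a dense subgroup of G. Then H (with the subspace topology) is locally minimal. -/
/-- A Hausdorff topological group `(G, τ)` is *locally minimal* if there exists a
neighborhood `V` of the identity such that the only Hausdorff group topology `σ`
coarser than `τ` for which `V` is still a `σ`-neighborhood of the identity is `τ` itself. -/
def LocallyMinimal (G : Type*) [Group G] [τ : TopologicalSpace G] : Prop :=
  ∃ V ∈ nhds (1 : G), ∀ σ : TopologicalSpace G, τ ≤ σ →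
    @IsTopologicalGroup G σ _ → @T2Space G σ → V ∈ @nhds G σ 1 → σ = τ

/-- A topological group is *NSnS* (has no small normal subgroups) if some neighborhood
of the identity contains no nontrivial normal subgroup. -/
def IsNSnS (G : Type*) [Group G] [TopologicalSpace G] : Prop :=
  ∃ V ∈ nhds (1 : G), ∀ N : Subgroup G, N.Normal → (N : Set G) ⊆ V → N = ⊥

/-!
Let `τ` be the topology of `G` and let `σ` be a group topology on `H` coarser than the subspace
topology. Because `H` is dense, the `τ`-closures in `G` of the `σ`-neighborhoods of `1` are
`τ`-neighborhoods of `1`, and they form a basis at `1` of a group topology `σ'` on `G` coarser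
than `τ`.

Fix a small closed `τ`-neighborhood `C` of `1`. If `C ∩ H` is a `σ`-neighborhood of `1`, then `C`,
being closed, is a `σ'`-neighborhood of `1`. Hence `σ'` has no small normal subgroups either, which
forces it to be Hausdorff, and local minimality of `G` gives `σ' = τ`. As the inclusion `H → G` is
continuous from `σ` to `σ'`, it follows that `σ` is the subspace topology.
-/

open Topology Pointwise

theorem IsNSnS.t2Space {G : Type*} [Group G] [TopologicalSpace G] [IsTopologicalGroup G]
    (h : IsNSnS G) : T2Space G := by
  obtain ⟨V, hV, hVbot⟩ := h
  have closure_one_subset : ((⊥ : Subgroup G).topologicalClosure : Set G) ⊆ V := by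
    rw [Subgroup.coe_topologicalClosure_bot, R0Space.closure_singleton]
    exact fun x hx => hx V hV
  have closure_one_eq_bot : (⊥ : Subgroup G).topologicalClosure = ⊥ :=
    hVbot _ (Subgroup.is_normal_topologicalClosure ⊥) closure_one_subset
  rw [IsTopologicalGroup.t2Space_iff_one_closed, ← Subgroup.coe_bot, ← closure_one_eq_bot]
  exact Subgroup.isClosed_topologicalClosure ⊥

theorem exists_mul_inv_mem_of_denseRange {ι G : Type*} [Group G] [TopologicalSpace G]
    [IsTopologicalGroup G] {f : ι → G} (hf : DenseRange f) (g : G) {U : Set G} (hU : U ∈ 𝓝 1) :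
    ∃ k, g * (f k)⁻¹ ∈ U := by
  have : ContinuousAt (fun y : G => g * y⁻¹) g := by fun_prop
  obtain ⟨_, ⟨k, rfl⟩, hk⟩ :=
    hf.inter_nhds_nonempty (this.preimage_mem_nhds (by rwa [mul_inv_cancel]))
  exact ⟨k, hk⟩

theorem continuous_groupFilterBasis_topology {K G : Type*} [Group K]
    [TopologicalSpace K] [IsTopologicalGroup K] [Group G] (B : GroupFilterBasis G) (f : K →* G)
    (h : ∀ U ∈ B, f ⁻¹' U ∈ 𝓝 1) : Continuous[_, B.topology] f := by
  let := B.topology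
  exact continuous_of_tendsto_nhds_one f (B.nhds_one_hasBasis.tendsto_right_iff.2 h)

section ClosureTopology

variable {K G : Type*} [Group K] [TopologicalSpace K] [Group G] [τ : TopologicalSpace G]

/-- A homomorphism is *nearly open* if the closure of the image of every neighborhood of `1` is a
neighborhood of `1`. This is what makes these closures generate a topology coarser than that of
`G`. Continuity is not part of the notion. -/
def IsNearlyOpenHom (f : K →* G) : Prop :=
  ∀ O ∈ 𝓝 (1 : K), closure (f '' O) ∈ 𝓝 (1 : G)

theorem isNearlyOpenHom_of_induced_le {f : K →* G} (hf : DenseRange f)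
    (hle : τ.induced f ≤ ‹TopologicalSpace K›) : IsNearlyOpenHom f := by
  intro O hO
  obtain ⟨A, hA, hAO⟩ : ∃ A ∈ 𝓝 (1 : G), f ⁻¹' A ⊆ O := by
    simpa only [nhds_induced, map_one, Filter.mem_comap] using nhds_mono hle hO
  obtain ⟨U, hUA, hU, hU1⟩ := mem_nhds_iff.1 hA
  refine Filter.mem_of_superset (hU.mem_nhds hU1) ?_
  calc U ⊆ closure (U ∩ Set.range f) := hf.open_subset_closure_inter hU
    _ = closure (f '' (f ⁻¹' U)) := by rw [Set.image_preimage_eq_inter_range]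
    _ ⊆ closure (f '' O) := closure_mono (Set.image_mono ((Set.preimage_mono hUA).trans hAO))

variable [IsTopologicalGroup K] [IsTopologicalGroup G] (f : K →* G) {O : Set K}

theorem exists_closure_image_mul_subset (hO : O ∈ 𝓝 1) :
    ∃ P ∈ 𝓝 (1 : K), closure (f '' P) * closure (f '' P) ⊆ closure (f '' O) := by
  obtain ⟨P, hP, hP1, hPO⟩ := exists_open_nhds_one_mul_subset hO
  refine ⟨P, hP.mem_nhds hP1, ?_⟩
  calc closure (f '' P) * closure (f '' P)
      ⊆ closure (f '' P * f '' P) := smul_set_closure_subset _ _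
    _ = closure (f '' (P * P)) := by rw [Set.image_mul]
    _ ⊆ closure (f '' O) := closure_mono (Set.image_mono hPO)

theorem exists_conj_mem_closure_image_of_near_one (hO : O ∈ 𝓝 1) :
    ∃ P ∈ 𝓝 (1 : K), ∀ a ∈ closure (f '' P), ∀ x ∈ closure (f '' P),
      a * x * a⁻¹ ∈ closure (f '' O) := by
  have hconj : ContinuousAt (fun p : K × K => p.1 * p.2 * p.1⁻¹) (1, 1) := by fun_prop
  obtain ⟨P, hP, hPO⟩ := Filter.mem_prod_same_iff.1 <|
    nhds_prod_eq (x := (1 : K)) (y := (1 : K)) ▸ hconj.preimage_mem_nhds (by simpa using hO)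
  refine ⟨P, hP, fun a ha x hx => ?_⟩
  refine map_mem_closure₂ (f := fun a x : G => a * x * a⁻¹) (by fun_prop) ha hx ?_
  rintro _ ⟨k, hk, rfl⟩ _ ⟨l, hl, rfl⟩
  exact ⟨k * l * k⁻¹, hPO (Set.mk_mem_prod hk hl), by simp⟩

theorem exists_conj_map_mem_closure_image (k : K) (hO : O ∈ 𝓝 1) :
    ∃ P ∈ 𝓝 (1 : K), ∀ x ∈ closure (f '' P), f k * x * (f k)⁻¹ ∈ closure (f '' O) := by
  have hconj : ContinuousAt (fun l : K => k * l * k⁻¹) 1 := by fun_prop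
  refine ⟨_, hconj.preimage_mem_nhds (by simpa using hO), fun x hx => ?_⟩
  refine map_mem_closure (f := fun x : G => f k * x * (f k)⁻¹) (by fun_prop) hx ?_
  rintro _ ⟨l, hl, rfl⟩
  exact ⟨k * l * k⁻¹, hl, by simp⟩

variable {f}

-- `g` is the product of an element close to `1` and an element of the range of `f`.
theorem exists_conj_mem_closure_image_of_denseRange (hf : DenseRange f)
    (hopen : IsNearlyOpenHom f) (g : G) (hO : O ∈ 𝓝 1) :
    ∃ P ∈ 𝓝 (1 : K), ∀ x ∈ closure (f '' P), g * x * g⁻¹ ∈ closure (f '' O) := by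
  obtain ⟨Q, hQ, hQO⟩ := exists_conj_mem_closure_image_of_near_one f hO
  obtain ⟨k, hk⟩ := exists_mul_inv_mem_of_denseRange hf g (hopen Q hQ)
  obtain ⟨P, hP, hPQ⟩ := exists_conj_map_mem_closure_image f k hQ
  refine ⟨P, hP, fun x hx => ?_⟩
  have hfactor : g * (f k)⁻¹ * (f k * x * (f k)⁻¹) * (g * (f k)⁻¹)⁻¹ = g * x * g⁻¹ := by group
  exact hfactor ▸ hQO _ hk _ (hPQ x hx)

variable (hf : DenseRange f) (hopen : IsNearlyOpenHom f)

/-- The group filter basis on `G` formed by the closures of the images under `f` of the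
neighborhoods of `1` in `K`. -/
abbrev closureImageBasis : GroupFilterBasis G where
  sets := (fun O => closure (f '' O)) '' (𝓝 (1 : K)).sets
  nonempty := ⟨_, Set.univ, Filter.univ_mem, rfl⟩
  inter_sets := by
    rintro _ _ ⟨O, hO, rfl⟩ ⟨P, hP, rfl⟩
    exact ⟨_, ⟨O ∩ P, Filter.inter_mem hO hP, rfl⟩,
      (closure_mono (Set.image_inter_subset f O P)).trans (closure_inter_subset_inter_closure _ _)⟩
  one' := by
    rintro _ ⟨O, hO, rfl⟩
    exact mem_of_mem_nhds (hopen O hO)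
  mul' := by
    rintro _ ⟨O, hO, rfl⟩
    obtain ⟨P, hP, hPO⟩ := exists_closure_image_mul_subset f hO
    exact ⟨_, ⟨P, hP, rfl⟩, hPO⟩
  inv' := by
    rintro _ ⟨O, hO, rfl⟩
    refine ⟨_, ⟨O⁻¹, inv_mem_nhds_one K hO, rfl⟩, ?_⟩
    simp only [Set.image_inv, ← inv_closure]
    rfl
  conj' := by
    rintro g _ ⟨O, hO, rfl⟩
    obtain ⟨P, hP, hPO⟩ := exists_conj_mem_closure_image_of_denseRange hf hopen g hO
    exact ⟨_, ⟨P, hP, rfl⟩, hPO⟩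

/-- The transport `σ'` of the topology of `K` along a dense nearly open homomorphism: the group
topology on `G` with `closureImageBasis` as a basis at `1`. It is a second topology on `G`, next to
the instance `τ` in which the closures are taken. -/
abbrev closureTopology : TopologicalSpace G :=
  (closureImageBasis hf hopen).topology

theorem le_closureTopology : τ ≤ closureTopology hf hopen := by
  refine continuous_id_iff_le.1 (continuous_groupFilterBasis_topology _ (MonoidHom.id G) ?_)
  rintro _ ⟨O, hO, rfl⟩
  exact hopen O hO

theorem continuous_closureTopology : Continuous[_, closureTopology hf hopen] f := by
  refine continuous_groupFilterBasis_topology _ f ?_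
  rintro _ ⟨O, hO, rfl⟩
  exact Filter.mem_of_superset hO fun k hk => subset_closure (Set.mem_image_of_mem f hk)

theorem mem_nhds_one_closureTopology {C : Set G} (hC : IsClosed C) (hfC : f ⁻¹' C ∈ 𝓝 1) :
    C ∈ @nhds G (closureTopology hf hopen) 1 :=
  Filter.mem_of_superset ((closureImageBasis hf hopen).mem_nhds_one ⟨_, hfC, rfl⟩)
    (closure_minimal (Set.image_preimage_subset f C) hC)

end ClosureTopology

/-- A dense subgroup of a locally minimal NSnS Hausdorff topological group is locally
minimal. -/
theorem denseSubgroup_locallyMinimal_of_NSnS {G : Type*} [Group G] [TopologicalSpace G]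
    [IsTopologicalGroup G] [T2Space G] (hmin : LocallyMinimal G) (hnsns : IsNSnS G)
    (H : Subgroup G) (hH : Dense (H : Set G)) :
    LocallyMinimal ↥H := by
  obtain ⟨V, hV, hVmin⟩ := hmin
  obtain ⟨W, hW, hWbot⟩ := hnsns
  obtain ⟨C, hC, hCclosed, hCVW⟩ := exists_mem_nhds_isClosed_subset (Filter.inter_mem hV hW)
  obtain ⟨hCV, hCW⟩ := Set.subset_inter_iff.1 hCVW
  refine ⟨H.subtype ⁻¹' C, continuous_subtype_val.continuousAt.preimage_mem_nhds hC, ?_⟩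
  intro σ hσ _ _ hσC
  have hdense : DenseRange H.subtype := hH.denseRange_val
  have hopen : IsNearlyOpenHom H.subtype := isNearlyOpenHom_of_induced_le hdense hσ
  have hCext : C ∈ @nhds G (closureTopology hdense hopen) 1 :=
    mem_nhds_one_closureTopology hdense hopen hCclosed hσC
  have hT2 : @T2Space G (closureTopology hdense hopen) :=
    @IsNSnS.t2Space G _ (closureTopology hdense hopen) inferInstance
      ⟨W, Filter.mem_of_superset hCext hCW, hWbot⟩
  have hext : closureTopology hdense hopen = ‹TopologicalSpace G› :=
    hVmin _ (le_closureTopology hdense hopen) inferInstance hT2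
      (Filter.mem_of_superset hCext hCV)
  refine le_antisymm ?_ hσ
  calc σ ≤ (closureTopology hdense hopen).induced H.subtype :=
        (continuous_closureTopology hdense hopen).le_induced
    _ = instTopologicalSpaceSubtype := by rw [hext]; rfl
end

section
/- Every abelian group that is unbounded (i.e. not of finite exponent: for no n ∈ ℕ does nx = 0 hold for all x) admits a non-discrete locally quasi-convex UFSS group topology. -/
/-- `(1/n)U = {x : kx ∈ U for all 1 ≤ k ≤ n}`. -/
def invDiv {G : Type*} [AddGroup G] (n : ℕ) (U : Set G) : Set G :=
  {x | ∀ k : ℕ, 1 ≤ k → k ≤ n → k • x ∈ U}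

/-- A Hausdorff topological abelian group is *UFSS* (uniformly free from small subgroups)
if there is a symmetric neighborhood `U` of `0` such that the sets `(1/n)U`, `n ∈ ℕ`,
form a neighborhood basis at `0`. -/
def IsUFSS (G : Type*) [AddGroup G] [TopologicalSpace G] : Prop :=
  ∃ U ∈ nhds (0 : G), (∀ x ∈ U, -x ∈ U) ∧
    (∀ n : ℕ, 1 ≤ n → invDiv n U ∈ nhds (0 : G)) ∧
    (∀ V ∈ nhds (0 : G), ∃ n : ℕ, 1 ≤ n ∧ invDiv n U ⊆ V)

/-- `𝕋₊`, the image of `[-1/4, 1/4]` in `𝕋 = ℝ/ℤ`. -/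
noncomputable def Tplus : Set UnitAddCircle :=
  (fun r : ℝ => (r : UnitAddCircle)) '' Set.Icc (-(1/4) : ℝ) (1/4)

/-- The polar of a subset `A` of a topological abelian group: all continuous characters
`χ : G → 𝕋` with `χ(A) ⊆ 𝕋₊`. -/
def polar {G : Type*} [AddGroup G] [TopologicalSpace G] (A : Set G) :
    Set (G →+ UnitAddCircle) :=
  {χ | Continuous χ ∧ ∀ x ∈ A, χ x ∈ Tplus}

/-- A subset `A` is *quasi-convex* if it coincides with its quasi-convex hull
`{x : χ(x) ∈ 𝕋₊ for all χ in the polar of A}`. -/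
def IsQuasiConvex {G : Type*} [AddGroup G] [TopologicalSpace G] (A : Set G) : Prop :=
  A = {x | ∀ χ ∈ polar A, χ x ∈ Tplus}

/-- A topological abelian group is *locally quasi-convex* if it has a neighborhood basis
at `0` consisting of quasi-convex sets. -/
def IsLocallyQuasiConvex (G : Type*) [AddGroup G] [TopologicalSpace G] : Prop :=
  ∀ V ∈ nhds (0 : G), ∃ A : Set G, IsQuasiConvex A ∧ A ∈ nhds (0 : G) ∧ A ⊆ V

/-!
A set `X` of characters makes `G` a topological group under uniform convergence on `X`. Its
neighborhoods of `0` are controlled by `U = {g : χ g ∈ 𝕋₊ for χ ∈ X}`, because in the circle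
`kt ∈ 𝕋₊` for all `k ≤ n` means exactly `n‖t‖ ≤ 1/4`; so this topology is UFSS, and locally
quasi-convex since `(1/n)U` is cut out by the characters `kχ`. It remains to find `X` separating
points of `G` such that some nonzero elements of `G` are uniformly small on `X`.

If `h` has infinite order, send `h` to a point `t` of infinite order in the circle and let `X`
consist of the characters with `χ h ∈ {0, t}`; Dirichlet's theorem provides small multiples of `h`.

If `G` is torsion, choose `x 0, x 1, …` such that the order `m n` of `x n` modulo the subgroup
generated by the earlier terms exceeds `n + 1`, and let `X` be the set of `χ` with
`‖χ (x n)‖ ≤ 1 / m n` for all `n`. A character given on that subgroup can be extended to `x n`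
with freedom `1 / m n`, so every prescription on finitely many terms satisfying the constraints
extends to an element of `X`.
-/

open Filter Topology Set

local notation "𝕋" => UnitAddCircle

section Circle

theorem norm_coe_unitAddCircle_le (r : ℝ) : ‖(r : 𝕋)‖ ≤ |r| := by
  simpa [UnitAddCircle.norm_eq] using round_le r 0

theorem exists_coe_eq_abs_eq_norm (t : 𝕋) : ∃ r : ℝ, (r : 𝕋) = t ∧ |r| = ‖t‖ := by
  obtain ⟨r, rfl⟩ := QuotientAddGroup.mk_surjective t
  refine ⟨r - round r, ?_, UnitAddCircle.norm_eq.symm⟩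
  have coe_round : ((round r : ℝ) : 𝕋) = 0 :=
    (AddCircle.coe_eq_zero_iff 1).2 ⟨round r, by simp⟩
  rw [AddCircle.coe_sub, coe_round, sub_zero]

theorem mem_Tplus_iff_norm_le {t : 𝕋} : t ∈ Tplus ↔ ‖t‖ ≤ 1 / 4 := by
  constructor
  · rintro ⟨r, hr, rfl⟩
    exact (norm_coe_unitAddCircle_le r).trans (abs_le.2 hr)
  · intro ht
    obtain ⟨r, rfl, hr⟩ := exists_coe_eq_abs_eq_norm t
    exact ⟨r, abs_le.1 (hr.trans_le ht), rfl⟩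

theorem forall_nsmul_mem_Tplus_iff {t : 𝕋} {n : ℕ} :
    (∀ k : ℕ, 1 ≤ k → k ≤ n → k • t ∈ Tplus) ↔ n * ‖t‖ ≤ 1 / 4 := by
  simp only [mem_Tplus_iff_norm_le]
  constructor
  · intro h
    obtain ⟨r, rfl, hr⟩ := exists_coe_eq_abs_eq_norm t
    induction n with
    | zero => norm_num
    | succ n ih =>
      have previous : n * |r| ≤ 1 / 4 := hr ▸ ih fun k hk hkn => h k hk (by lia)
      have first : |r| ≤ 1 / 4 := by simpa [hr] using h 1 le_rfl (by lia)
      have abs_mul_r : |(n + 1 : ℕ) * r| = (n + 1 : ℕ) * |r| := by rw [abs_mul, Nat.abs_cast]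
      -- Hence `|(n + 1) r| ≤ 1/2`, so the multiple does not wrap around the circle.
      have norm_multiple : ‖(((n + 1 : ℕ) * r : ℝ) : 𝕋)‖ = |(n + 1 : ℕ) * r| :=
        (AddCircle.norm_coe_eq_abs_iff 1 one_ne_zero).2 <| by
          rw [abs_mul_r, abs_one]; push_cast; linarith
      rw [← hr, ← abs_mul_r, ← norm_multiple, ← nsmul_eq_mul, AddCircle.coe_nsmul]
      exact h (n + 1) (by lia) le_rfl
  · intro h k _ hkn
    calc ‖k • t‖ ≤ k * ‖t‖ := norm_nsmul_le
      _ ≤ n * ‖t‖ := by gcongr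
      _ ≤ 1 / 4 := h

theorem exists_addOrderOf_eq_zero_unitAddCircle : ∃ t : 𝕋, addOrderOf t = 0 := by
  refine ⟨(√2 : ℝ), addOrderOf_eq_zero_iff.2 ?_⟩
  rw [AddCircle.not_isOfFinAddOrder_iff_forall_rat_ne_div]
  intro q
  rw [div_one]
  exact (irrational_sqrt_two.ne_rat q).symm

theorem exists_addOrderOf_eq_mul_norm_le_one (m : ℕ) :
    ∃ t : 𝕋, addOrderOf t = m ∧ m * ‖t‖ ≤ 1 := by
  obtain rfl | hm := m.eq_zero_or_pos
  · obtain ⟨t, ht⟩ := exists_addOrderOf_eq_zero_unitAddCircle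
    exact ⟨t, ht, by simp⟩
  · refine ⟨(1 / m : ℝ), AddCircle.addOrderOf_period_div hm, ?_⟩
    have hm' : (0 : ℝ) < m := Nat.cast_pos.2 hm
    calc m * ‖((1 / m : ℝ) : 𝕋)‖ ≤ m * |1 / (m : ℝ)| := by
          gcongr; exact norm_coe_unitAddCircle_le _
      _ = 1 := by rw [abs_of_pos (by positivity), mul_one_div_cancel hm'.ne']

theorem exists_nsmul_eq_nsmul_mul_norm_le_one (m : ℕ) (t : 𝕋) :
    ∃ w : 𝕋, m • w = m • t ∧ m * ‖w‖ ≤ 1 := by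
  obtain rfl | hm := m.eq_zero_or_pos
  · exact ⟨t, rfl, by simp⟩
  obtain ⟨r, hr, hr_norm⟩ := exists_coe_eq_abs_eq_norm (m • t)
  have hm' : (0 : ℝ) < m := Nat.cast_pos.2 hm
  refine ⟨(r / m : ℝ), ?_, ?_⟩
  · rw [← AddCircle.coe_nsmul, nsmul_eq_mul, mul_div_cancel₀ _ hm'.ne', hr]
  · calc m * ‖((r / m : ℝ) : 𝕋)‖ ≤ m * |r / m| := by
          gcongr; exact norm_coe_unitAddCircle_le _
      _ = ‖m • t‖ := by rw [abs_div, Nat.abs_cast, mul_div_cancel₀ _ hm'.ne', hr_norm]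
      _ ≤ |1| / 2 := AddCircle.norm_le_half_period 1 one_ne_zero
      _ ≤ 1 := by norm_num

end Circle

section UniformTopology

variable {G : Type*} [AddCommGroup G]

/-- The prepolar of a set `X` of characters, written `X^◁` in duality theory. A set `A` is
quasi-convex when it equals `prepolar (polar A)`. -/
def prepolar (X : Set (G →+ 𝕋)) : Set G :=
  {g | ∀ χ ∈ X, χ g ∈ Tplus}

/-- The neighborhood filter of `0` is that of uniform convergence on the set `X` of characters;
for a group topology this determines the topology. -/
def IsUniformTopology [TopologicalSpace G] (X : Set (G →+ 𝕋)) : Prop :=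
  (𝓝 (0 : G)).HasBasis (fun ε : ℝ => 0 < ε) fun ε => {g | ∀ χ ∈ X, ‖χ g‖ < ε}

/-- Only `0` is killed by all characters in `X`. -/
def SeparatesFromZero (X : Set (G →+ 𝕋)) : Prop :=
  ∀ g : G, g ≠ 0 → ∃ χ ∈ X, χ g ≠ 0

/-- There are nonzero elements on which all characters in `X` are uniformly small; this makes
the topology of uniform convergence on `X` non-discrete. -/
def HasSmallElements (X : Set (G →+ 𝕋)) : Prop :=
  ∀ ε : ℝ, 0 < ε → ∃ g : G, g ≠ 0 ∧ ∀ χ ∈ X, ‖χ g‖ < ε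

theorem exists_isUniformTopology (X : Set (G →+ 𝕋)) :
    ∃ _ : TopologicalSpace G, IsTopologicalAddGroup G ∧ IsUniformTopology X := by
  let eval : G →+ UniformFun X 𝕋 :=
    { toFun := fun g => UniformFun.ofFun fun χ => χ.1 g
      map_zero' := funext fun χ => map_zero χ.1
      map_add' := fun a b => funext fun χ => map_add χ.1 a b }
  let τ : TopologicalSpace G := .induced eval inferInstance
  refine ⟨τ, topologicalAddGroup_induced eval, ?_⟩
  have basis := (UniformFun.hasBasis_nhds_zero_of_basis (α := X)
    (Metric.nhds_basis_ball (x := (0 : 𝕋)))).comap eval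
  rw [← map_zero eval, ← nhds_induced] at basis
  refine basis.congr (fun _ => Iff.rfl) fun ε _ => ?_
  ext g
  simp only [mem_preimage, mem_ofPred_eq, mem_ball_zero_iff]
  exact Subtype.forall

theorem invDiv_prepolar (X : Set (G →+ 𝕋)) (n : ℕ) :
    invDiv n (prepolar X) = {g | ∀ χ ∈ X, n * ‖χ g‖ ≤ 1 / 4} := by
  ext g
  simp only [invDiv, prepolar, mem_ofPred_eq, map_nsmul, ← forall_nsmul_mem_Tplus_iff]
  tauto

theorem invDiv_prepolar_eq_prepolar (X : Set (G →+ 𝕋)) (n : ℕ) :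
    invDiv n (prepolar X) = prepolar {ψ | ∃ χ ∈ X, ∃ k : ℕ, 1 ≤ k ∧ k ≤ n ∧ ψ = k • χ} := by
  ext g
  constructor
  · rintro hg _ ⟨χ, hχ, k, hk, hkn, rfl⟩
    simpa using hg k hk hkn χ hχ
  · intro hg k hk hkn χ hχ
    simpa using hg (k • χ) ⟨χ, hχ, k, hk, hkn, rfl⟩

theorem isQuasiConvex_prepolar [TopologicalSpace G] {X : Set (G →+ 𝕋)}
    (hX : ∀ χ ∈ X, Continuous χ) : IsQuasiConvex (prepolar X) := by
  refine Subset.antisymm (fun g hg χ hχ => hχ.2 g hg) fun g hg χ hχ => ?_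
  exact hg χ ⟨hX χ hχ, fun y hy => hy χ hχ⟩

namespace IsUniformTopology

variable [TopologicalSpace G] {X : Set (G →+ 𝕋)}

theorem continuous [IsTopologicalAddGroup G] (hX : IsUniformTopology X) {χ : G →+ 𝕋}
    (hχ : χ ∈ X) : Continuous χ := by
  refine continuous_of_continuousAt_zero χ ?_
  rw [ContinuousAt, map_zero, HasBasis.tendsto_iff hX Metric.nhds_basis_ball]
  exact fun ε hε => ⟨ε, hε, fun g hg => mem_ball_zero_iff.2 (hg χ hχ)⟩

theorem t2Space [IsTopologicalAddGroup G] (hX : IsUniformTopology X)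
    (hsep : SeparatesFromZero X) : T2Space G := by
  refine IsTopologicalAddGroup.t2Space_of_zero_sep fun g hg => ?_
  obtain ⟨χ, hχ, hχg⟩ := hsep g hg
  exact ⟨_, hX.mem_of_mem (norm_pos_iff.2 hχg), fun hlt => lt_irrefl _ (hlt χ hχ)⟩

theorem not_discreteTopology (hX : IsUniformTopology X) (hsmall : HasSmallElements X) :
    ¬ DiscreteTopology G := by
  intro _
  obtain ⟨ε, hε, hsub⟩ := hX.mem_iff.1 (show {0} ∈ 𝓝 (0 : G) by simp)
  obtain ⟨g, hg, hχg⟩ := hsmall ε hε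
  exact hg (hsub hχg)

theorem invDiv_prepolar_mem_nhds (hX : IsUniformTopology X) {n : ℕ} (hn : 1 ≤ n) :
    invDiv n (prepolar X) ∈ 𝓝 (0 : G) := by
  have hn' : (0 : ℝ) < n := Nat.cast_pos.2 hn
  refine hX.mem_iff.2 ⟨1 / 4 / n, by positivity, fun g hg => ?_⟩
  rw [invDiv_prepolar]
  exact fun χ hχ => (le_div_iff₀' hn').1 (hg χ hχ).le

theorem exists_invDiv_prepolar_subset (hX : IsUniformTopology X) {V : Set G}
    (hV : V ∈ 𝓝 (0 : G)) : ∃ n : ℕ, 1 ≤ n ∧ invDiv n (prepolar X) ⊆ V := by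
  obtain ⟨ε, hε, hsub⟩ := hX.mem_iff.1 hV
  obtain ⟨n, hn⟩ := exists_nat_gt (1 / 4 / ε)
  have hn' : (0 : ℝ) < n := lt_trans (by positivity) hn
  refine ⟨n, Nat.cast_pos.1 hn', fun g hg => hsub fun χ hχ => ?_⟩
  rw [invDiv_prepolar] at hg
  rw [div_lt_iff₀ hε] at hn
  exact lt_of_mul_lt_mul_left ((hg χ hχ).trans_lt hn) hn'.le

theorem isUFSS (hX : IsUniformTopology X) : IsUFSS G := by
  refine ⟨prepolar X, ?_, fun g hg χ hχ => ?_, fun n hn => hX.invDiv_prepolar_mem_nhds hn,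
    fun V hV => hX.exists_invDiv_prepolar_subset hV⟩
  · refine mem_of_superset (hX.invDiv_prepolar_mem_nhds le_rfl) fun g hg => ?_
    simpa using hg 1 le_rfl le_rfl
  · rw [map_neg, mem_Tplus_iff_norm_le, norm_neg, ← mem_Tplus_iff_norm_le]
    exact hg χ hχ

theorem isLocallyQuasiConvex [IsTopologicalAddGroup G] (hX : IsUniformTopology X) :
    IsLocallyQuasiConvex G := by
  intro V hV
  obtain ⟨n, hn, hsub⟩ := hX.exists_invDiv_prepolar_subset hV
  refine ⟨_, ?_, hX.invDiv_prepolar_mem_nhds hn, hsub⟩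
  rw [invDiv_prepolar_eq_prepolar]
  refine isQuasiConvex_prepolar ?_
  rintro _ ⟨χ, hχ, k, -, -, rfl⟩
  exact (hX.continuous hχ).const_smul k

end IsUniformTopology

end UniformTopology

section Extension

variable {G A : Type*} [AddCommGroup G] [AddCommGroup A]

theorem exists_addMonoidHom_apply_eq [DivisibleBy A ℤ] (g : G) {a : A}
    (h : addOrderOf a ∣ addOrderOf g) : ∃ φ : G →+ A, φ g = a := by
  let gen : AddSubgroup.zmultiples g := ⟨g, AddSubgroup.mem_zmultiples g⟩
  have hgen : ∀ y, y ∈ AddSubgroup.zmultiples gen := by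
    rintro ⟨_, k, rfl⟩
    exact ⟨k, rfl⟩
  have hdvd : addOrderOf a ∣ addOrderOf gen := by rwa [AddSubgroup.addOrderOf_mk]
  obtain ⟨φ, hφ⟩ := (Module.Baer.of_divisible A).extension_property_addMonoidHom
    (AddSubgroup.zmultiples g).subtype Subtype.val_injective
    (addMonoidHomOfForallMemZMultiples hgen hdvd)
  refine ⟨φ, ?_⟩
  rw [← addMonoidHomOfForallMemZMultiples_apply_gen hgen hdvd, ← hφ]
  rfl

theorem exists_addMonoidHom_le_ker_apply_eq [DivisibleBy A ℤ] (S : AddSubgroup G) (q : G) {a : A}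
    (h : addOrderOf a ∣ addOrderOf (q : G ⧸ S)) : ∃ φ : G →+ A, S ≤ φ.ker ∧ φ q = a := by
  obtain ⟨φ, hφ⟩ := exists_addMonoidHom_apply_eq (q : G ⧸ S) h
  refine ⟨φ.comp (QuotientAddGroup.mk' S), fun s hs => ?_, hφ⟩
  rw [AddMonoidHom.mem_ker, AddMonoidHom.comp_apply, QuotientAddGroup.mk'_apply,
    (QuotientAddGroup.eq_zero_iff s).2 hs, map_zero]

theorem mem_of_mem_sup_zmultiples_of_apply_eq_zero {S : AddSubgroup G} {q g : G} {φ : G →+ A}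
    (hS : S ≤ φ.ker) (hq : addOrderOf (φ q) = addOrderOf (q : G ⧸ S))
    (hg : g ∈ S ⊔ AddSubgroup.zmultiples q) (hφg : φ g = 0) : g ∈ S := by
  obtain ⟨s, hs, _, ⟨k, rfl⟩, rfl⟩ := AddSubgroup.mem_sup.1 hg
  have hk : k • φ q = 0 := by
    simpa [AddMonoidHom.mem_ker.1 (hS hs)] using hφg
  rw [← addOrderOf_dvd_iff_zsmul_eq_zero, hq, addOrderOf_dvd_iff_zsmul_eq_zero,
    ← QuotientAddGroup.mk_zsmul, QuotientAddGroup.eq_zero_iff] at hk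
  exact S.add_mem hs hk

theorem exists_character_le_ker_apply_ne_zero {S : AddSubgroup G} {g : G} (hg : g ∉ S) :
    ∃ χ : G →+ 𝕋, S ≤ χ.ker ∧ χ g ≠ 0 := by
  obtain ⟨t, ht, -⟩ := exists_addOrderOf_eq_mul_norm_le_one (addOrderOf (g : G ⧸ S))
  obtain ⟨χ, hS, rfl⟩ := exists_addMonoidHom_le_ker_apply_eq S g ht.dvd
  refine ⟨χ, hS, fun hχg => hg ?_⟩
  exact mem_of_mem_sup_zmultiples_of_apply_eq_zero hS ht
    (AddSubgroup.mem_sup_right (AddSubgroup.mem_zmultiples g)) hχg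

theorem exists_character_eqOn_mul_norm_le_one (S : AddSubgroup G) (q : G) (χ : G →+ 𝕋) :
    ∃ χ' : G →+ 𝕋, EqOn χ' χ S ∧ addOrderOf (q : G ⧸ S) * ‖χ' q‖ ≤ 1 := by
  obtain ⟨w, hw, hw_norm⟩ := exists_nsmul_eq_nsmul_mul_norm_le_one (addOrderOf (q : G ⧸ S)) (χ q)
  have hdvd : addOrderOf (χ q - w) ∣ addOrderOf (q : G ⧸ S) := by
    rw [addOrderOf_dvd_iff_nsmul_eq_zero, nsmul_sub, hw, sub_self]
  obtain ⟨ψ, hS, hψ⟩ := exists_addMonoidHom_le_ker_apply_eq S q hdvd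
  refine ⟨χ - ψ, fun s hs => ?_, ?_⟩
  · rw [AddMonoidHom.sub_apply, AddMonoidHom.mem_ker.1 (hS hs), sub_zero]
  · rwa [AddMonoidHom.sub_apply, hψ, sub_sub_cancel]

theorem exists_addMonoidHom_forall_mem_of_finset {ι M B : Type*} [AddZeroClass M] [AddZeroClass B]
    [TopologicalSpace B] [CompactSpace B] [T2Space B] [ContinuousAdd B] {C : ι → Set (M → B)}
    (hC : ∀ i, IsClosed (C i)) (h : ∀ s : Finset ι, ∃ φ : M →+ B, ∀ i ∈ s, ⇑φ ∈ C i) :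
    ∃ φ : M →+ B, ∀ i, ⇑φ ∈ C i := by
  have hcompact : IsCompact (range ((↑) : (M →+ B) → M → B)) :=
    (AddMonoidHom.isClosed_range_coe M B).isCompact
  obtain ⟨_, ⟨φ, rfl⟩, hφ⟩ := hcompact.inter_iInter_nonempty C hC fun s => by
    obtain ⟨φ, hφ⟩ := h s
    exact ⟨φ, mem_range_self φ, mem_iInter₂.2 hφ⟩
  exact ⟨φ, mem_iInter.1 hφ⟩

end Extension

section Sequence

variable {G : Type*} [AddCommGroup G]

/-- The subgroup generated by the terms of `x` with index less than `n`. -/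
def spanBefore (x : ℕ → G) (n : ℕ) : AddSubgroup G :=
  AddSubgroup.closure (x '' Iio n)

/-- The order of `x n` modulo the subgroup generated by the earlier terms, with the convention
of `addOrderOf` that it is `0` when no positive multiple of `x n` lies in that subgroup. -/
noncomputable def relOrder (x : ℕ → G) (n : ℕ) : ℕ :=
  addOrderOf (x n : G ⧸ spanBefore x n)

/-- The characters `χ` with `‖χ (x n)‖ ≤ 1 / relOrder x n` for all `n`, where a relative order
`0` imposes no condition. -/
def smallCharacters (x : ℕ → G) : Set (G →+ 𝕋) :=
  {χ | ∀ n, relOrder x n * ‖χ (x n)‖ ≤ 1}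

variable (x : ℕ → G)

theorem spanBefore_zero : spanBefore x 0 = ⊥ := by
  simp [spanBefore]

theorem spanBefore_succ (n : ℕ) :
    spanBefore x (n + 1) = spanBefore x n ⊔ AddSubgroup.zmultiples (x n) := by
  rw [spanBefore, ← Order.succ_eq_add_one, Order.Iio_succ_eq_insert, image_insert_eq, insert_eq,
    AddSubgroup.closure_union, ← AddSubgroup.zmultiples_eq_closure, sup_comm, spanBefore]

theorem spanBefore_mono : Monotone (spanBefore x) := fun _ _ h =>
  AddSubgroup.closure_mono (image_mono (Iio_subset_Iio h))

variable {x}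

theorem apply_mem_spanBefore {i n : ℕ} (h : i < n) : x i ∈ spanBefore x n :=
  AddSubgroup.subset_closure (mem_image_of_mem x h)

theorem exists_character_eqOn_forall_lt {M : ℕ} {χ₀ : G →+ 𝕋}
    (hχ₀ : ∀ i < M, relOrder x i * ‖χ₀ (x i)‖ ≤ 1) (n : ℕ) :
    ∃ χ : G →+ 𝕋, EqOn χ χ₀ (spanBefore x M) ∧ ∀ i < n, relOrder x i * ‖χ (x i)‖ ≤ 1 := by
  induction n with
  | zero => exact ⟨χ₀, eqOn_refl _ _, by simp⟩
  | succ n ih =>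
    obtain hnM | hMn := lt_or_ge n M
    · exact ⟨χ₀, eqOn_refl _ _, fun i hi => hχ₀ i (by lia)⟩
    obtain ⟨χ, hχ, hχ_small⟩ := ih
    obtain ⟨χ', hχ', hχ'_small⟩ := exists_character_eqOn_mul_norm_le_one (spanBefore x n) (x n) χ
    refine ⟨χ', (hχ'.mono (spanBefore_mono x hMn)).trans hχ, fun i hi => ?_⟩
    obtain hi | rfl := Nat.lt_succ_iff_lt_or_eq.1 hi
    · rw [hχ' (apply_mem_spanBefore hi)]
      exact hχ_small i hi
    · exact hχ'_small

theorem exists_mem_smallCharacters_eqOn {M : ℕ} {χ₀ : G →+ 𝕋}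
    (hχ₀ : ∀ i < M, relOrder x i * ‖χ₀ (x i)‖ ≤ 1) :
    ∃ χ ∈ smallCharacters x, EqOn χ χ₀ (spanBefore x M) := by
  let C (n : ℕ) : Set (G → 𝕋) :=
    {f | relOrder x n * ‖f (x n)‖ ≤ 1} ∩ ⋂ g ∈ spanBefore x M, {f | f g = χ₀ g}
  have hC : ∀ n, IsClosed (C n) := fun n =>
    (isClosed_le (by fun_prop) continuous_const).inter <|
      isClosed_biInter fun g _ => isClosed_eq (continuous_apply g) continuous_const
  obtain ⟨χ, hχ⟩ := exists_addMonoidHom_forall_mem_of_finset hC fun s => by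
    obtain ⟨n, hn⟩ := s.exists_nat_subset_range
    obtain ⟨χ, hχ, hχ_small⟩ := exists_character_eqOn_forall_lt hχ₀ n
    exact ⟨χ, fun i hi => ⟨hχ_small i (Finset.mem_range.1 (hn hi)), mem_iInter₂.2 hχ⟩⟩
  exact ⟨χ, fun n => (hχ n).1, mem_iInter₂.1 (hχ 0).2⟩

theorem exists_mem_smallCharacters_apply_ne_zero {N : ℕ} {g : G} (hg : g ∉ spanBefore x N)
    (hg' : g ∈ spanBefore x (N + 1)) : ∃ χ ∈ smallCharacters x, χ g ≠ 0 := by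
  obtain ⟨t, ht, ht_norm⟩ := exists_addOrderOf_eq_mul_norm_le_one (relOrder x N)
  obtain ⟨χ₀, hker, rfl⟩ := exists_addMonoidHom_le_ker_apply_eq (spanBefore x N) (x N) ht.dvd
  have hχ₀ : ∀ i < N + 1, relOrder x i * ‖χ₀ (x i)‖ ≤ 1 := by
    intro i hi
    obtain hi | rfl := Nat.lt_succ_iff_lt_or_eq.1 hi
    · simp [AddMonoidHom.mem_ker.1 (hker (apply_mem_spanBefore hi))]
    · exact ht_norm
  obtain ⟨χ, hχ, hχ_eq⟩ := exists_mem_smallCharacters_eqOn hχ₀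
  refine ⟨χ, hχ, fun hχg => hg ?_⟩
  exact mem_of_mem_sup_zmultiples_of_apply_eq_zero hker ht (spanBefore_succ x N ▸ hg')
    ((hχ_eq hg').symm.trans hχg)

theorem separatesFromZero_smallCharacters (x : ℕ → G) :
    SeparatesFromZero (smallCharacters x) := by
  intro g hg
  by_cases hspan : ∃ n, g ∈ spanBefore x n
  · have hg₀ : g ∉ spanBefore x 0 := by rwa [spanBefore_zero, AddSubgroup.mem_bot]
    obtain ⟨N, hN, hN'⟩ := Nat.exists_not_and_succ_of_not_zero_of_exists hg₀ hspan
    exact exists_mem_smallCharacters_apply_ne_zero hN hN'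
  · rw [← AddSubgroup.mem_iSup_of_directed (spanBefore_mono x).directed_le] at hspan
    obtain ⟨χ, hker, hχg⟩ := exists_character_le_ker_apply_ne_zero hspan
    refine ⟨χ, fun n => ?_, hχg⟩
    have hxn : x n ∈ ⨆ m, spanBefore x m :=
      AddSubgroup.mem_iSup_of_mem (n + 1) (apply_mem_spanBefore n.lt_succ_self)
    simp [AddMonoidHom.mem_ker.1 (hker hxn)]

theorem hasSmallElements_smallCharacters (hx : ∀ n, n + 1 < relOrder x n) :
    HasSmallElements (smallCharacters x) := by
  intro ε hε
  obtain ⟨n, hn⟩ := exists_nat_one_div_lt hε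
  refine ⟨x n, fun hxn => ?_, fun χ hχ => lt_of_le_of_lt ?_ hn⟩
  · have : relOrder x n = 1 := by rw [relOrder, hxn, QuotientAddGroup.mk_zero, addOrderOf_zero]
    have := hx n
    lia
  · rw [le_div_iff₀' (by positivity)]
    calc (n + 1) * ‖χ (x n)‖ ≤ relOrder x n * ‖χ (x n)‖ := by
          gcongr; exact_mod_cast (hx n).le
      _ ≤ 1 := hχ n

end Sequence

section Unbounded

variable {G : Type*} [AddCommGroup G]

theorem exponentExists_of_addSubgroup_of_quotient {S : AddSubgroup G}
    (hS : AddMonoid.ExponentExists S) (hQ : AddMonoid.ExponentExists (G ⧸ S)) :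
    AddMonoid.ExponentExists G := by
  obtain ⟨m, hm, hmS⟩ := hS
  obtain ⟨n, hn, hnQ⟩ := hQ
  refine ⟨m * n, Nat.mul_pos hm hn, fun g => ?_⟩
  have hng : n • g ∈ S := by
    rw [← QuotientAddGroup.eq_zero_iff, QuotientAddGroup.mk_nsmul, hnQ]
  rw [mul_nsmul']
  exact congrArg Subtype.val (hmS ⟨n • g, hng⟩)

theorem exists_lt_addOrderOf_quotient_closure (htor : IsAddTorsion G)
    (hub : ¬ AddMonoid.ExponentExists G) (s : Finset G) (n : ℕ) :
    ∃ g : G, n < addOrderOf (g : G ⧸ AddSubgroup.closure (s : Set G)) := by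
  set S := AddSubgroup.closure (s : Set G)
  have : Finite S := AddCommGroup.finite_of_fg_isAddTorsion S (htor.addSubgroup S)
  have hQ_tor : IsAddTorsion (G ⧸ S) := htor.of_surjective (QuotientAddGroup.mk'_surjective S)
  have hinf : (range fun a : G ⧸ S => addOrderOf a).Infinite := fun hfin =>
    hub (exponentExists_of_addSubgroup_of_quotient .of_finite (hQ_tor.exponentExists hfin))
  obtain ⟨_, ⟨a, rfl⟩, ha⟩ := hinf.exists_gt n
  obtain ⟨g, rfl⟩ := QuotientAddGroup.mk_surjective a
  exact ⟨g, ha⟩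

theorem exists_seq_lt_relOrder (htor : IsAddTorsion G) (hub : ¬ AddMonoid.ExponentExists G) :
    ∃ x : ℕ → G, ∀ n, n + 1 < relOrder x n := by
  classical
  choose next hnext using exists_lt_addOrderOf_quotient_closure htor hub
  obtain ⟨terms, terms_zero, terms_succ⟩ : ∃ terms : ℕ → Finset G, terms 0 = ∅ ∧
      ∀ n, terms (n + 1) = insert (next (terms n) (n + 1)) (terms n) :=
    ⟨Nat.rec ∅ fun n s => insert (next s (n + 1)) s, rfl, fun _ => rfl⟩
  let x (n : ℕ) : G := next (terms n) (n + 1)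
  have coe_terms (n : ℕ) : (terms n : Set G) = x '' Iio n := by
    induction n with
    | zero => simp [terms_zero]
    | succ n ih =>
      rw [← Order.succ_eq_add_one, Order.Iio_succ_eq_insert, image_insert_eq, ← ih,
        Order.succ_eq_add_one, terms_succ, Finset.coe_insert]
  have spanBefore_eq (n : ℕ) : spanBefore x n = AddSubgroup.closure (terms n) := by
    rw [spanBefore, coe_terms]
  refine ⟨x, fun n => ?_⟩
  have hxn : n + 1 < addOrderOf (x n : G ⧸ AddSubgroup.closure (terms n : Set G)) :=
    hnext (terms n) (n + 1)
  rwa [← spanBefore_eq] at hxn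

theorem exists_separating_small_of_not_isOfFinAddOrder {h : G} (hh : ¬ IsOfFinAddOrder h) :
    ∃ X : Set (G →+ 𝕋), SeparatesFromZero X ∧ HasSmallElements X := by
  have hh_order : addOrderOf h = 0 := addOrderOf_eq_zero hh
  obtain ⟨t, ht⟩ := exists_addOrderOf_eq_zero_unitAddCircle
  refine ⟨{χ | χ h = 0 ∨ χ h = t}, fun g hg => ?_, fun ε hε => ?_⟩
  · by_cases hgh : g ∈ AddSubgroup.zmultiples h
    · obtain ⟨k, rfl⟩ := AddSubgroup.mem_zmultiples_iff.1 hgh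
      obtain ⟨χ, hχ⟩ := exists_addMonoidHom_apply_eq h (a := t) (by rw [ht, hh_order])
      refine ⟨χ, .inr hχ, fun hχg => hg ?_⟩
      rwa [map_zsmul, hχ, ← addOrderOf_dvd_iff_zsmul_eq_zero, ht, ← hh_order,
        addOrderOf_dvd_iff_zsmul_eq_zero] at hχg
    · obtain ⟨χ, hker, hχg⟩ := exists_character_le_ker_apply_ne_zero hgh
      exact ⟨χ, .inl (hker (AddSubgroup.mem_zmultiples h)), hχg⟩
  · obtain ⟨n, hn⟩ := exists_nat_one_div_lt hε
    obtain ⟨j, hj, hjt⟩ := AddCircle.exists_norm_nsmul_le t n.succ_pos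
    have hjε : ‖j • t‖ < ε := by
      refine hjt.trans_lt (lt_of_le_of_lt ?_ hn)
      gcongr
      push_cast
      linarith
    refine ⟨j • h, fun hjh => ?_, ?_⟩
    · exact hh (isOfFinAddOrder_iff_nsmul_eq_zero.2 ⟨j, hj.1, hjh⟩)
    · rintro χ (hχ | hχ)
      · rwa [map_nsmul, hχ, nsmul_zero, norm_zero]
      · rwa [map_nsmul, hχ]

theorem exists_separating_small_of_not_exponentExists (hub : ¬ AddMonoid.ExponentExists G) :
    ∃ X : Set (G →+ 𝕋), SeparatesFromZero X ∧ HasSmallElements X := by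
  by_cases htor : IsAddTorsion G
  · obtain ⟨x, hx⟩ := exists_seq_lt_relOrder htor hub
    exact ⟨_, separatesFromZero_smallCharacters x, hasSmallElements_smallCharacters hx⟩
  · obtain ⟨h, hh⟩ := (not_isAddTorsion_iff G).1 htor
    exact exists_separating_small_of_not_isOfFinAddOrder hh

end Unbounded

/-- Every unbounded abelian group (not of finite exponent) admits a non-discrete locally
quasi-convex UFSS group topology. -/
theorem unbounded_admits_nondiscrete_lqc_ufss_topology (G : Type*) [AddCommGroup G]
    (hub : ¬ ∃ n : ℕ, 1 ≤ n ∧ ∀ x : G, n • x = 0) :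
    ∃ τ : TopologicalSpace G,
      @IsTopologicalAddGroup G τ _ ∧ @T2Space G τ ∧ τ ≠ ⊥ ∧
      @IsUFSS G _ τ ∧ @IsLocallyQuasiConvex G _ τ := by
  obtain ⟨X, hsep, hsmall⟩ := exists_separating_small_of_not_exponentExists hub
  obtain ⟨τ, hgroup, hX⟩ := exists_isUniformTopology X
  exact ⟨τ, hgroup, hX.t2Space hsep, fun hbot => hX.not_discreteTopology hsmall ⟨hbot⟩,
    hX.isUFSS, hX.isLocallyQuasiConvex⟩
end
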